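/- For all u, v ∈ K(S_{n+1}), one has u ≤_L v in the left weak order of S_{n+1} if and only if φ_n(u) ≤_L φ_n(v) in the left weak order of B_n. Consequently, φ_n is an isomorphism of posets from (K(S_{n+1}), ≤_L) onto (K(B_n), ≤_L), where each set carries the partial order induced from the left weak order of the ambient group. -/

import Mathlib

/-! The map `φ` merely re-encodes relative order. If `PhiRel w u` for a permutation `w` of length
`n + 1`, then position `i` of `u` corresponds to position `i + 1` of `w` (0-based), and
* `(i, j) ∈ Inv u` iff `(i + 1, j + 1) ∈ Inv w`;
* `i ∈ Neg u` iff `(0, i + 1) ∈ Inv w`;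
* for `i < j`, `(i, j) ∈ Nsp u` iff `(0, j + 1) ∈ Inv w`.

So `Inv w` is recovered from `Inv u` (pairs avoiding position `0`) and `Neg u` (pairs containing
position `0`), while `Nsp u` is determined by `Neg u`; the equivalence of the two orders is then
immediate.

The three identities, with the bound `|u i| ≤ n`, form the predicate `Encodes`, proved by
induction on `PhiRel` in `encodes_of_phiRel`. In both recursive cases the appended block `t` has
constant sign, keeps the relative order of the tail of `w`, and after the shift in `⊕` it exceeds in
absolute value every entry of the head (`encodes_oplus`); its sign records whether the cut is a
global ascent or a global descent, that is, how each entry of the block compares with the entry at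
position `0`. That the recursion stays among permutations is a pigeonhole argument
(`length_add_le`). -/

namespace SepPaperFormal

noncomputable section

open Polynomial

def st (a : List ℤ) : List ℤ :=
  a.map (fun x => ((a.filter (fun y => decide (y < x))).length : ℤ) + 1)

def sts (a : List ℤ) : List ℤ :=
  a.map (fun x => x.sign * (((a.filter (fun y => decide (|y| < |x|))).length : ℤ) + 1))

def IsSignedPerm (w : List ℤ) : Prop :=
  (w.map Int.natAbs).Perm (List.range' 1 w.length)

def ContainsB (w u : List ℤ) : Prop := ∃ s : List ℤ, s.Sublist w ∧ sts s = u

def ContainsA (w u : List ℤ) : Prop := ∃ s : List ℤ, s.Sublist w ∧ st s = u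

def IsSepB (w : List ℤ) : Prop :=
  IsSignedPerm w ∧
    ¬ ContainsB w [-2, 1] ∧ ¬ ContainsB w [2, -1] ∧
    ¬ ContainsB w [3, 1, 4, 2] ∧ ¬ ContainsB w [2, 4, 1, 3] ∧
    ¬ ContainsB w [-3, -1, -4, -2] ∧ ¬ ContainsB w [-2, -4, -1, -3]

def IsSepA (w : List ℤ) : Prop :=
  IsSignedPerm w ∧ (∀ x ∈ w, 0 < x) ∧
    ¬ ContainsA w [3, 1, 4, 2] ∧ ¬ ContainsA w [2, 4, 1, 3]

def oplus (u v : List ℤ) : List ℤ :=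
  u ++ v.map (fun x => x + x.sign * (u.length : ℤ))

def ominus (u v : List ℤ) : List ℤ :=
  u.map (fun x => x + x.sign * (v.length : ℤ)) ++ v

def AllSameSign (l : List ℤ) : Prop := (∀ x ∈ l, 0 < x) ∨ (∀ x ∈ l, x < 0)

def OppSign (a b : List ℤ) : Prop := ∀ x ∈ a, ∀ y ∈ b, x * y < 0

-- blocks for statement 3
def blockOf (w : List ℤ) (q : List ℕ) (i : ℕ) : List ℤ :=
  (w.drop q[i]!).take (q[i+1]! - q[i]!)

def cutSeq (w : List ℤ) (cuts : List ℕ) : List ℕ := 0 :: (cuts ++ [w.length])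

def GoodDecomp (w : List ℤ) (cuts : List ℕ) : Prop :=
  List.Chain' (· < ·) (cutSeq w cuts) ∧
  w = List.foldl oplus (blockOf w (cutSeq w cuts) 0)
        ((List.range cuts.length).map (fun i => sts (blockOf w (cutSeq w cuts) (i + 1)))) ∧
  IsSepB (blockOf w (cutSeq w cuts) 0) ∧
  (∀ i, 1 ≤ i → i ≤ cuts.length → IsSepB (sts (blockOf w (cutSeq w cuts) i))) ∧
  (∀ j, j ≤ cuts.length → AllSameSign (blockOf w (cutSeq w cuts) j)) ∧
  (∀ i, 1 ≤ i → i ≤ cuts.length →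
    OppSign (blockOf w (cutSeq w cuts) (i - 1)) (blockOf w (cutSeq w cuts) i))

-- statement 4
inductive InC : List ℤ → Prop
  | one : InC [1]
  | negone : InC [-1]
  | dsum (u v : List ℤ) : InC u → InC v → InC (oplus u v)
  | ssum (u v : List ℤ) : InC u → InC v → AllSameSign (u ++ v) → InC (ominus u v)

-- the map φₙ as a relation
inductive PhiRel : List ℤ → List ℤ → Prop
  | base : PhiRel [1] []
  | gasc (w u : List ℤ) (p : ℕ) (hp1 : 1 ≤ p) (hp2 : p < w.length)
      (h : ∀ i j, i < p → p ≤ j → j < w.length → w[i]! < w[j]!)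
      (ih : PhiRel (w.take p) u) :
      PhiRel w (oplus u (st (w.drop p)))
  | gdes (w u : List ℤ) (p : ℕ) (hp1 : 1 ≤ p) (hp2 : p < w.length)
      (h : ∀ i j, i < p → p ≤ j → j < w.length → w[j]! < w[i]!)
      (ih : PhiRel (st (w.take p)) u) :
      PhiRel w (oplus u ((w.drop p).map (fun x => x - ((w.length - p : ℕ) : ℤ) - 1)))

-- the map ψₙ as a relation
inductive PsiRel : List ℤ → List ℤ → Prop
  | base : PsiRel [] [1]
  | pos (w u : List ℤ) (p : ℕ) (hp : p < w.length)
      (hdec : w = oplus (w.take p) (sts (w.drop p)))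
      (hsign : AllSameSign (w.drop p))
      (hlast : 0 < w[w.length - 1]!)
      (ih : PsiRel (w.take p) u) :
      PsiRel w (oplus u (sts (w.drop p)))
  | neg (w u : List ℤ) (p : ℕ) (hp : p < w.length)
      (hdec : w = oplus (w.take p) (sts (w.drop p)))
      (hsign : AllSameSign (w.drop p))
      (hlast : w[w.length - 1]! < 0)
      (ih : PsiRel (w.take p) u) :
      PsiRel w (ominus u ((sts (w.drop p)).map (fun x => x + ((w.length - p : ℕ) : ℤ) + 1)))

-- descent statistics
def DesB (w : List ℤ) : Finset ℕ :=
  (Finset.range w.length).filter (fun i => (if i = 0 then (0 : ℤ) else w[i-1]!) > w[i]!)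

def DDesB (w : List ℤ) : Finset ℕ :=
  (Finset.range w.length).filter (fun i =>
    (i = 0 ∨ (if i - 1 = 0 then (0 : ℤ) else w[i-2]!) > (if i = 0 then (0 : ℤ) else w[i-1]!)) ∧
    (if i = 0 then (0 : ℤ) else w[i-1]!) > w[i]!)

def DesA (w : List ℤ) : Finset ℕ :=
  (Finset.range w.length).filter (fun i => 1 ≤ i ∧ w[i-1]! > w[i]!)

def DDesA (w : List ℤ) : Finset ℕ :=
  (Finset.range w.length).filter (fun i => 1 ≤ i ∧
    (i = 1 ∨ w[i-2]! > w[i-1]!) ∧ w[i-1]! > w[i]!)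

-- inversions, negatives, negative sum pairs (0-based index sets)
def InvF (w : List ℤ) : Finset (ℕ × ℕ) :=
  (Finset.range w.length ×ˢ Finset.range w.length).filter
    (fun p => p.1 < p.2 ∧ w[p.2]! < w[p.1]!)

def NegF (w : List ℤ) : Finset ℕ :=
  (Finset.range w.length).filter (fun i => w[i]! < 0)

def NspF (w : List ℤ) : Finset (ℕ × ℕ) :=
  (Finset.range w.length ×ˢ Finset.range w.length).filter
    (fun p => p.1 < p.2 ∧ w[p.1]! + w[p.2]! < 0)

/-- Left weak order on `S_n` (combinatorial characterization). -/
def leS (u v : List ℤ) : Prop := InvF u ⊆ InvF v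

/-- Left weak order on `B_n` (combinatorial characterization). -/
def leB (u v : List ℤ) : Prop := InvF u ⊆ InvF v ∧ NegF u ⊆ NegF v ∧ NspF u ⊆ NspF v

/-- Coxeter length in type `B`. -/
def lenB (w : List ℤ) : ℕ := (NegF w).card + (InvF w).card + (NspF w).card

/-- Coxeter length in type `A`. -/
def lenS (w : List ℤ) : ℕ := (InvF w).card

def IsPermW (w : List ℤ) : Prop := IsSignedPerm w ∧ ∀ x ∈ w, 0 < x

/-- Rank generating function of the principal lower ideal `Λ_w^B`. -/
def FLamB (w : List ℤ) : Polynomial ℚ :=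
  ∑ᶠ u ∈ {u : List ℤ | u.length = w.length ∧ IsSignedPerm u ∧ leB u w},
    (X : Polynomial ℚ) ^ lenB u

/-- Rank generating function of the principal upper ideal `V_w^B`. -/
def FVB (w : List ℤ) : Polynomial ℚ :=
  ∑ᶠ u ∈ {u : List ℤ | u.length = w.length ∧ IsSignedPerm u ∧ leB w u},
    (X : Polynomial ℚ) ^ lenB u

/-- Rank generating function of the principal lower ideal `Λ_w^S`. -/
def FLamS (w : List ℤ) : Polynomial ℚ :=
  ∑ᶠ u ∈ {u : List ℤ | u.length = w.length ∧ IsPermW u ∧ leS u w},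
    (X : Polynomial ℚ) ^ lenS u

/-- Rank generating function of the principal upper ideal `V_w^S`. -/
def FVS (w : List ℤ) : Polynomial ℚ :=
  ∑ᶠ u ∈ {u : List ℤ | u.length = w.length ∧ IsPermW u ∧ leS w u},
    (X : Polynomial ℚ) ^ lenS u

/-- `[i] = 1 + q + ⋯ + q^{i-1}`. -/
def qint (i : ℕ) : Polynomial ℚ := ∑ j ∈ Finset.range i, (X : Polynomial ℚ) ^ j

/-- `[m]! = [1][2]⋯[m]`. -/
def qfact (m : ℕ) : Polynomial ℚ := ∏ i ∈ Finset.range m, qint (i + 1)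

-- separating trees
inductive STree where
  | leaf : STree
  | node : Bool → STree → STree → STree

def numLeaves : STree → ℕ
  | .leaf => 1
  | .node _ l r => numLeaves l + numLeaves r

def Decomp (w : List ℤ) (p : ℕ) : Prop :=
  (w = oplus (w.take p) (sts (w.drop p)) ∧ IsSepB (w.take p) ∧ IsSepB (sts (w.drop p)) ∧
    AllSameSign (w.drop p)) ∨
  (w = ominus (sts (w.take p)) (w.drop p) ∧ IsSepB (sts (w.take p)) ∧ IsSepB (w.drop p) ∧
    AllSameSign (w.drop p))

/-- `IsSepTree w T`: `T` is the (shape of the) separating tree of the separable signed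
permutation `w`, where internal nodes labeled `true` are `⊕`-nodes and those labeled
`false` are `⊖`-nodes, and the separating index is chosen largest possible. -/
inductive IsSepTree : List ℤ → STree → Prop
  | leaf (x : ℤ) : IsSepTree [x] .leaf
  | nodeA (w : List ℤ) (p : ℕ) (l r : STree)
      (hp1 : 1 ≤ p) (hp2 : p < w.length)
      (hmax : ∀ q, p < q → q < w.length → ¬ Decomp w q)
      (hdec : w = oplus (w.take p) (sts (w.drop p)))
      (h1 : IsSepB (w.take p)) (h2 : IsSepB (sts (w.drop p)))
      (hsgn : AllSameSign (w.drop p))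
      (hl : IsSepTree (w.take p) l) (hr : IsSepTree (sts (w.drop p)) r) :
      IsSepTree w (.node (decide (w[p-1]! < w[p]!)) l r)
  | nodeB (w : List ℤ) (p : ℕ) (l r : STree)
      (hp1 : 1 ≤ p) (hp2 : p < w.length)
      (hmax : ∀ q, p < q → q < w.length → ¬ Decomp w q)
      (hdec : w = ominus (sts (w.take p)) (w.drop p))
      (h1 : IsSepB (sts (w.take p))) (h2 : IsSepB (w.drop p))
      (hsgn : AllSameSign (w.drop p))
      (hl : IsSepTree (sts (w.take p)) l) (hr : IsSepTree (w.drop p) r) :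
      IsSepTree w (.node (decide (w[p-1]! < w[p]!)) l r)

/-- Multiset of leaf-counts `N(V)` over internal `⊕`-nodes `V` whose parent is a
`⊖`-node (the root, whose parent label is `none`, is excluded): the set `S⁺(w)`. -/
def plusNodes : STree → Option Bool → Multiset ℕ
  | .leaf, _ => 0
  | .node b l r, parent =>
      (if b = true ∧ parent = some false then ({numLeaves (.node b l r)} : Multiset ℕ) else 0)
        + plusNodes l (some b) + plusNodes r (some b)

/-- Multiset of leaf-counts `N(V)` over internal `⊖`-nodes `V` whose parent is a
`⊕`-node (root excluded): the set `S⁻(w)`. -/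
def minusNodes : STree → Option Bool → Multiset ℕ
  | .leaf, _ => 0
  | .node b l r, parent =>
      (if b = false ∧ parent = some true then ({numLeaves (.node b l r)} : Multiset ℕ) else 0)
        + minusNodes l (some b) + minusNodes r (some b)

/-- `∏_{m ∈ s} [m]!`. -/
def qfactProd (s : Multiset ℕ) : Polynomial ℚ := (s.map qfact).prod


/-! ### Words and their encodings -/

/-- `w` is a word of distinct integers in `[1, w.length]`, i.e. a permutation written as
a word. -/
def PermLike (w : List ℤ) : Prop :=
  w.Nodup ∧ ∀ x ∈ w, 1 ≤ x ∧ x ≤ (w.length : ℤ)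

/-- The inversions, negative entries and negative sum pairs of `u` are those prescribed by the
inversions of `w`: position `i` of `u` corresponds to position `i + 1` of `w`, and position `0` of
`w` plays the role of the value zero. -/
def Encodes (w u : List ℤ) : Prop :=
  w.length = u.length + 1 ∧
  (∀ i, i < u.length → |u[i]!| ≤ (u.length : ℤ) ∧ (u[i]! < 0 ↔ w[i + 1]! < w[0]!)) ∧
  ∀ i j, i < j → j < u.length →
    (u[j]! < u[i]! ↔ w[j + 1]! < w[i + 1]!) ∧ (u[i]! + u[j]! < 0 ↔ w[j + 1]! < w[0]!)

/-! ### Entries of lists built by `map`, `take`, `drop` and `⊕` -/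

lemma getElem!_mem' (a : List ℤ) (i : ℕ) (h : i < a.length) : a[i]! ∈ a := by
  rw [getElem!_pos a i h]; exact List.getElem_mem h

lemma map_getElem! (a : List ℤ) (f : ℤ → ℤ) (i : ℕ) (h : i < a.length) :
    (a.map f)[i]! = f a[i]! := by
  rw [getElem!_pos a i h, getElem!_pos _ i (by simpa using h), List.getElem_map]

lemma take_getElem! (a : List ℤ) (p i : ℕ) (h : i < p) (h' : i < a.length) :
    (a.take p)[i]! = a[i]! := by
  rw [getElem!_pos a i h', getElem!_pos _ i (by simp; omega), List.getElem_take]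

lemma drop_getElem! (a : List ℤ) (p i : ℕ) (h : p + i < a.length) :
    (a.drop p)[i]! = a[p + i]! := by
  rw [getElem!_pos a _ h, getElem!_pos _ i (by simp; omega), List.getElem_drop]

lemma oplus_getElem!_left (u t : List ℤ) (i : ℕ) (h : i < u.length) :
    (oplus u t)[i]! = u[i]! := by
  unfold oplus
  rw [getElem!_pos u i h, getElem!_pos _ i (by simp; omega), List.getElem_append_left h]

lemma oplus_getElem!_right (u t : List ℤ) (k : ℕ) (h : k < t.length) :
    (oplus u t)[u.length + k]! = t[k]! + (t[k]!).sign * (u.length : ℤ) := by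
  unfold oplus
  rw [getElem!_pos t k h, getElem!_pos _ (u.length + k) (by simp; omega),
    List.getElem_append_right (by omega)]
  simp

/-! ### Standardization -/

/-- The rank of `x` in `a`, which is the value `st` assigns to it. -/
def rank (a : List ℤ) (x : ℤ) : ℤ := ((a.filter (fun y => decide (y < x))).length : ℤ) + 1

lemma rank_mono (a : List ℤ) {x y : ℤ} (h : x ≤ y) : rank a x ≤ rank a y := by
  unfold rank
  have := (List.monotone_filter_right a (p := fun z => decide (z < x))
    (q := fun z => decide (z < y)) (by intro z hz; simp at hz ⊢; omega)).length_le
  omega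

/-- Entries strictly increase under standardization, because `x` itself is counted in the rank of
any larger `y`. -/
lemma rank_strict (a : List ℤ) {x y : ℤ} (hx : x ∈ a) (h : x < y) : rank a x < rank a y := by
  have hle : rank a x ≤ rank a y := rank_mono a h.le
  refine lt_of_le_of_ne hle fun he => ?_
  have hs := List.monotone_filter_right a (p := fun z => decide (z < x))
    (q := fun z => decide (z < y)) (by intro z hz; simp at hz ⊢; omega)
  have heq := hs.eq_of_length (by unfold rank at he; omega)
  have : x ∈ a.filter (fun z => decide (z < y)) := by simp [hx, h]
  rw [← heq] at this
  simp at this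

lemma rank_lt_iff (a : List ℤ) {x y : ℤ} (hx : x ∈ a) : rank a x < rank a y ↔ x < y := by
  refine ⟨fun h => ?_, rank_strict a hx⟩
  by_contra hc
  have := rank_mono a (not_lt.mp hc)
  omega

lemma rank_pos (a : List ℤ) (x : ℤ) : 1 ≤ rank a x := by unfold rank; omega

lemma rank_le (a : List ℤ) {x : ℤ} (hx : x ∈ a) : rank a x ≤ (a.length : ℤ) := by
  unfold rank
  have : (a.filter (fun y => decide (y < x))).length < a.length :=
    List.length_filter_lt_length_iff_exists.mpr ⟨x, hx, by simp⟩
  omega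

lemma st_eq (a : List ℤ) : st a = a.map (rank a) := rfl

lemma st_length (a : List ℤ) : (st a).length = a.length := by simp [st_eq]

lemma st_lt_iff (a : List ℤ) (i j : ℕ) (hi : i < a.length) (hj : j < a.length) :
    (st a)[i]! < (st a)[j]! ↔ a[i]! < a[j]! := by
  rw [st_eq, map_getElem! _ _ _ hi, map_getElem! _ _ _ hj,
    rank_lt_iff a (getElem!_mem' a i hi)]

lemma st_permLike (a : List ℤ) (h : a.Nodup) : PermLike (st a) := by
  refine ⟨?_, ?_⟩
  · rw [st_eq]
    refine h.map_on fun x hx y hy hxy => ?_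
    have h1 := rank_lt_iff a (x := x) (y := y) hx
    have h2 := rank_lt_iff a (x := y) (y := x) hy
    omega
  · intro x hx
    rw [st_length]
    rw [st_eq, List.mem_map] at hx
    obtain ⟨y, hy, rfl⟩ := hx
    exact ⟨rank_pos a y, rank_le a hy⟩

/-! ### The encoding of a permutation by its image under `φ` -/

/-- Pigeonhole: distinct integers in `(x, N]` number at most `N - x`. -/
lemma length_add_le (a : List ℤ) (ha : a.Nodup) (x N : ℤ) (hxN : x ≤ N)
    (h : ∀ y ∈ a, x < y ∧ y ≤ N) : x + (a.length : ℤ) ≤ N := by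
  have hsub : a.toFinset ⊆ Finset.Ioc x N := by
    intro y hy
    simpa using h y (by simpa using hy)
  have := Finset.card_le_card hsub
  rw [List.toFinset_card_of_nodup ha, Int.card_Ioc] at this
  omega

/-- Appending a block `t` of constant sign that is order-isomorphic to the tail of `w`, the sign
being positive at a global ascent and negative at a global descent, preserves `Encodes`. The head
enters only through a word `h` order-isomorphic to it. -/
lemma encodes_oplus (w u t h : List ℤ) (p : ℕ) (hp1 : 1 ≤ p) (hp2 : p < w.length)
    (hh : h.length = p) (ht : t.length = w.length - p)
    (hord : ∀ i j, i < p → j < p → (h[i]! < h[j]! ↔ w[i]! < w[j]!))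
    (tord : ∀ k l, k < t.length → l < t.length → (t[k]! < t[l]! ↔ w[p + k]! < w[p + l]!))
    (hcut : (∀ i k, i < p → k < t.length →
          w[i]! < w[p + k]! ∧ 1 ≤ t[k]! ∧ t[k]! ≤ (t.length : ℤ)) ∨
      (∀ i k, i < p → k < t.length →
          w[p + k]! < w[i]! ∧ t[k]! ≤ -1 ∧ -(t.length : ℤ) ≤ t[k]!))
    (he : Encodes h u) : Encodes w (oplus u t) := by
  obtain ⟨hlen, he1, he2⟩ := he
  have holen : (oplus u t).length = u.length + t.length := by simp [oplus]
  have hup : u.length + 1 = p := by omega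
  have hsplit : ∀ i, i < u.length + t.length →
      i < u.length ∨ ∃ k, k < t.length ∧ i = u.length + k := by
    intro i hi
    by_cases h : i < u.length
    · exact Or.inl h
    · exact Or.inr ⟨i - u.length, by omega, by omega⟩
  have hidx : ∀ k, u.length + k + 1 = p + k := by intro k; omega
  -- values of the shifted block, according to its sign
  have hval : ∀ k, k < t.length →
      (0 < t[k]! → (oplus u t)[u.length + k]! = t[k]! + u.length) ∧
      (t[k]! < 0 → (oplus u t)[u.length + k]! = t[k]! - u.length) := by
    intro k hk
    rw [oplus_getElem!_right u t k hk]
    refine ⟨fun h0 => ?_, fun h0 => ?_⟩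
    · rw [Int.sign_eq_one_of_pos h0]; ring
    · rw [Int.sign_eq_neg_one_of_neg h0]; ring
  refine ⟨by omega, ?_, ?_⟩
  · intro i hi
    rw [holen] at hi ⊢
    rcases hsplit i hi with hi' | ⟨k, hk, rfl⟩
    · rw [oplus_getElem!_left _ _ _ hi']
      obtain ⟨hb, hn⟩ := he1 i hi'
      refine ⟨by push_cast; omega, ?_⟩
      rw [hn, hord _ _ (by omega) (by omega)]
    · obtain ⟨hv1, hv2⟩ := hval k hk
      rw [hidx]
      rcases hcut with hc | hc
      · obtain ⟨a, b, c⟩ := hc 0 k (by omega) hk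
        rw [hv1 (by omega), abs_le]
        push_cast
        refine ⟨⟨by omega, by omega⟩, by omega⟩
      · obtain ⟨a, b, c⟩ := hc 0 k (by omega) hk
        rw [hv2 (by omega), abs_le]
        push_cast
        refine ⟨⟨by omega, by omega⟩, by omega⟩
  · intro i j hij hj
    rw [holen] at hj
    rcases hsplit j hj with hj' | ⟨l, hl, rfl⟩
    · rw [oplus_getElem!_left _ _ _ hj', oplus_getElem!_left _ _ _ (by omega : i < u.length)]
      obtain ⟨ha, hb⟩ := he2 i j hij hj'
      rw [ha, hb, hord _ _ (by omega) (by omega), hord _ _ (by omega) (by omega)]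
      exact ⟨Iff.rfl, Iff.rfl⟩
    · obtain ⟨hv1, hv2⟩ := hval l hl
      rw [hidx]
      rcases hsplit i (by omega) with hi' | ⟨k, hk, rfl⟩
      · rw [oplus_getElem!_left _ _ _ hi']
        have hb := abs_le.mp (he1 i hi').1
        rcases hcut with hc | hc
        · obtain ⟨a, b, c⟩ := hc 0 l (by omega) hl
          have a' := (hc (i + 1) l (by omega) hl).1
          rw [hv1 (by omega)]
          refine ⟨by omega, by omega⟩
        · obtain ⟨a, b, c⟩ := hc 0 l (by omega) hl
          have a' := (hc (i + 1) l (by omega) hl).1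
          rw [hv2 (by omega)]
          refine ⟨by omega, by omega⟩
      · obtain ⟨hw1, hw2⟩ := hval k hk
        have hto := tord l k hl hk
        rw [hidx]
        rcases hcut with hc | hc
        · obtain ⟨a, b, c⟩ := hc 0 l (by omega) hl
          obtain ⟨a', b', c'⟩ := hc 0 k (by omega) hk
          rw [hv1 (by omega), hw1 (by omega), ← hto]
          refine ⟨by omega, by omega⟩
        · obtain ⟨a, b, c⟩ := hc 0 l (by omega) hl
          obtain ⟨a', b', c'⟩ := hc 0 k (by omega) hk
          rw [hv2 (by omega), hw2 (by omega), ← hto]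
          refine ⟨by omega, by omega⟩

lemma encodes_of_phiRel {w u : List ℤ} (hphi : PhiRel w u) : PermLike w → Encodes w u := by
  induction hphi with
  | base =>
    intro _
    refine ⟨rfl, ?_, ?_⟩
    · intro i hi; simp at hi
    · intro i j _ hj; simp at hj
  | gasc w u p hp1 hp2 h _ IH =>
    rintro ⟨hnd, hr⟩
    have hlt : (w.take p).length = p := by simp; omega
    have hld : (w.drop p).length = w.length - p := by simp
    have hperm : PermLike (w.take p) := by
      refine ⟨hnd.sublist (List.take_sublist p w), fun x hx => ?_⟩
      refine ⟨(hr x (List.mem_of_mem_take hx)).1, ?_⟩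
      -- all entries of the tail exceed `x`, leaving room for at most `p` values up to `x`
      have := length_add_le (w.drop p) (hnd.sublist (List.drop_sublist p w)) x w.length
        (hr x (List.mem_of_mem_take hx)).2 (by
          intro y hy
          refine ⟨?_, (hr y (List.mem_of_mem_drop hy)).2⟩
          obtain ⟨i, hi, rfl⟩ := List.mem_iff_getElem.mp hx
          obtain ⟨k, hk, rfl⟩ := List.mem_iff_getElem.mp hy
          have := h i (p + k) (by omega) (by omega) (by omega)
          rw [← take_getElem! w p i (by omega) (by omega),
            ← drop_getElem! w p k (by omega)] at this
          rwa [getElem!_pos _ i hi, getElem!_pos _ k hk] at this)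
      rw [hld] at this
      rw [hlt]
      omega
    refine encodes_oplus w u _ (w.take p) p hp1 hp2 hlt (by rw [st_length, hld]) ?_ ?_ ?_
      (IH hperm)
    · intro i j hi hj
      rw [take_getElem! w p i hi (by omega), take_getElem! w p j hj (by omega)]
    · intro k l hk hl
      rw [st_length] at hk hl
      rw [st_lt_iff _ _ _ hk hl, drop_getElem! w p k (by omega), drop_getElem! w p l (by omega)]
    · left
      intro i k hi hk
      refine ⟨h i (p + k) hi (by omega) (by rw [st_length] at hk; omega), ?_⟩
      have hm := getElem!_mem' _ k hk
      exact (st_permLike _ (hnd.sublist (List.drop_sublist p w))).2 _ hm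
  | gdes w u p hp1 hp2 h _ IH =>
    rintro ⟨hnd, hr⟩
    have hlt : (w.take p).length = p := by simp; omega
    have hld : (w.drop p).length = w.length - p := by simp
    refine encodes_oplus w u _ (st (w.take p)) p hp1 hp2 (by rw [st_length, hlt])
      (by simp) ?_ ?_ ?_
      (IH (st_permLike _ (hnd.sublist (List.take_sublist p w))))
    · intro i j hi hj
      rw [st_lt_iff _ _ _ (by omega) (by omega), take_getElem! w p i hi (by omega),
        take_getElem! w p j hj (by omega)]
    · intro k l hk hl
      rw [List.length_map] at hk hl
      rw [map_getElem! _ _ _ hk, map_getElem! _ _ _ hl, drop_getElem! w p k (by omega),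
        drop_getElem! w p l (by omega)]
      omega
    · right
      intro i k hi hk
      rw [List.length_map] at hk ⊢
      have hd := h i (p + k) hi (by omega) (by omega)
      have hm := hr _ (getElem!_mem' w (p + k) (by omega))
      -- the `p` entries of the head all exceed `w[p + k]!`
      have := length_add_le (w.take p) (hnd.sublist (List.take_sublist p w)) w[p + k]! w.length
        hm.2 (by
          intro y hy
          refine ⟨?_, (hr y (List.mem_of_mem_take hy)).2⟩
          obtain ⟨i, hi, rfl⟩ := List.mem_iff_getElem.mp hy
          have := h i (p + k) (by omega) (by omega) (by omega)
          rw [← take_getElem! w p i (by omega) (by omega)] at this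
          rwa [getElem!_pos _ i hi] at this)
      rw [map_getElem! _ _ _ hk, drop_getElem! w p k (by omega)]
      rw [hlt] at this
      rw [hld]
      refine ⟨hd, by omega, by omega⟩

/-! ### Transfer of inversion, negative and negative sum sets -/

lemma permLike_of_isSepA {w : List ℤ} (h : IsSepA w) : PermLike w := by
  obtain ⟨hp, hpos, -⟩ := h
  refine ⟨List.Nodup.of_map _ (hp.nodup_iff.mpr List.nodup_range'), fun x hx => ?_⟩
  have h0 := hpos x hx
  have h1 : x.natAbs ∈ List.range' 1 w.length :=
    hp.mem_iff.mp (List.mem_map_of_mem hx)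
  rw [List.mem_range'_1] at h1
  omega

lemma mem_InvF (w : List ℤ) (i j : ℕ) :
    (i, j) ∈ InvF w ↔ i < j ∧ j < w.length ∧ w[j]! < w[i]! := by
  simp only [InvF, Finset.mem_filter, Finset.mem_product, Finset.mem_range]
  constructor
  · rintro ⟨⟨_, h2⟩, h3, h4⟩; exact ⟨h3, h2, h4⟩
  · rintro ⟨h1, h2, h3⟩; exact ⟨⟨by omega, h2⟩, h1, h3⟩

lemma mem_NspF (w : List ℤ) (i j : ℕ) :
    (i, j) ∈ NspF w ↔ i < j ∧ j < w.length ∧ w[i]! + w[j]! < 0 := by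
  simp only [NspF, Finset.mem_filter, Finset.mem_product, Finset.mem_range]
  constructor
  · rintro ⟨⟨_, h2⟩, h3, h4⟩; exact ⟨h3, h2, h4⟩
  · rintro ⟨h1, h2, h3⟩; exact ⟨⟨by omega, h2⟩, h1, h3⟩

lemma mem_NegF (w : List ℤ) (i : ℕ) : i ∈ NegF w ↔ i < w.length ∧ w[i]! < 0 := by
  simp [NegF]

lemma Encodes.mem_InvF_iff {w u : List ℤ} (h : Encodes w u) (i j : ℕ) :
    (i, j) ∈ InvF u ↔ (i + 1, j + 1) ∈ InvF w := by
  rw [mem_InvF, mem_InvF, h.1]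
  constructor
  · rintro ⟨h1, h2, h3⟩
    exact ⟨by omega, by omega, (h.2.2 i j h1 h2).1.mp h3⟩
  · rintro ⟨h1, h2, h3⟩
    exact ⟨by omega, by omega, (h.2.2 i j (by omega) (by omega)).1.mpr h3⟩

lemma Encodes.mem_NegF_iff {w u : List ℤ} (h : Encodes w u) (j : ℕ) :
    j ∈ NegF u ↔ (0, j + 1) ∈ InvF w := by
  rw [mem_NegF, mem_InvF, h.1]
  constructor
  · rintro ⟨h2, h3⟩
    exact ⟨by omega, by omega, (h.2.1 j h2).2.mp h3⟩
  · rintro ⟨h1, h2, h3⟩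
    exact ⟨by omega, (h.2.1 j (by omega)).2.mpr h3⟩

lemma Encodes.mem_NspF_iff {w u : List ℤ} (h : Encodes w u) (i j : ℕ) :
    (i, j) ∈ NspF u ↔ i < j ∧ (0, j + 1) ∈ InvF w := by
  rw [mem_NspF, mem_InvF, h.1]
  constructor
  · rintro ⟨h1, h2, h3⟩
    exact ⟨h1, by omega, by omega, (h.2.2 i j h1 h2).2.mp h3⟩
  · rintro ⟨h0, h1, h2, h3⟩
    exact ⟨h0, by omega, (h.2.2 i j h0 (by omega)).2.mpr h3⟩

/-- For `u, v ∈ K(S_{n+1})`: `u ≤_L v` in `S_{n+1}` iff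
`φ_n(u) ≤_L φ_n(v)` in `B_n`; hence `φ_n` is a poset isomorphism from
`(K(S_{n+1}), ≤_L)` onto `(K(B_n), ≤_L)`. -/
theorem phi_poset_isomorphism (n : ℕ) (u v u' v' : List ℤ)
    (hu : u.length = n + 1) (hv : v.length = n + 1)
    (hsu : IsSepA u) (hsv : IsSepA v)
    (hphiu : PhiRel u u') (hphiv : PhiRel v v') :
    leS u v ↔ leB u' v' := by
  have eu := encodes_of_phiRel hphiu (permLike_of_isSepA hsu)
  have ev := encodes_of_phiRel hphiv (permLike_of_isSepA hsv)
  constructor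
  · intro h
    refine ⟨?_, ?_, ?_⟩
    · rintro ⟨i, j⟩ hij
      rw [ev.mem_InvF_iff]
      exact h ((eu.mem_InvF_iff i j).mp hij)
    · intro j hj
      rw [ev.mem_NegF_iff]
      exact h ((eu.mem_NegF_iff j).mp hj)
    · rintro ⟨i, j⟩ hij
      rw [ev.mem_NspF_iff]
      obtain ⟨h1, h2⟩ := (eu.mem_NspF_iff i j).mp hij
      exact ⟨h1, h h2⟩
  · rintro ⟨hI, hN, -⟩ ⟨i, j⟩ hij
    have hlt := ((mem_InvF u i j).mp hij).1
    obtain ⟨l, rfl⟩ : ∃ l, j = l + 1 := ⟨j - 1, by omega⟩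
    -- inversions at position `0` come from `Neg`, all others from `Inv`
    rcases i with _ | k
    · exact (ev.mem_NegF_iff l).mp (hN ((eu.mem_NegF_iff l).mpr hij))
    · exact (ev.mem_InvF_iff k l).mp (hI ((eu.mem_InvF_iff k l).mpr hij))

end

end SepPaperFormal
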